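/- Every measure μ ∈ M(𝕋) decomposes as μ = ν₀ + ν₁ + ν₂ where ν₀, ν₁ have natural spectrum and ν₂ is a discrete (purely atomic) measure. Explicitly, with θ₀ = (δ₀+δ_π)/2, θ₁ = (δ₀−δ_π)/2, ρ = (δ_α+δ_β)/2 for α, β, π linearly independent over ℚ, r₀ = r(μ∗θ₀), r₁ = r(μ∗θ₁), one takes ν₀ = μ∗θ₀ + r₀·ρ∗θ₁, ν₁ = μ∗θ₁ + r₁·ρ∗θ₀, ν₂ = −r₀·ρ∗θ₁ − r₁·ρ∗θ₀. -/

import Mathlib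

open Complex Real

/-!
The elements `θ₀, θ₁` are complementary idempotents, so each character of `M` sends one of them to
`0` and the other to `1`. On the characters with `θ₀ ↦ 1`, `ν₀` agrees with `μ * θ₀`, whose values
are bounded by its spectral radius `r₀`; on the remaining ones it agrees with `r₀ • ρ`, and
`‖ρ‖ ≤ 1`. By Gelfand theory the spectrum of `ν₀` is thus contained in the disc of radius `r₀`.
Conversely, at odd frequencies `θ₁` has coefficient `1`, and there the coefficients of `ρ`, namely
`(exp (-i n α) + exp (-i n β)) / 2`, are dense in the unit disc by Kronecker's theorem
(`dense_orbit`). Hence the coefficients of `ν₀` are dense in the disc of radius `r₀`, and the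
spectrum, the disc and the closure of the coefficient range coincide (`natural_spectrum_aux`).
The argument for `ν₁` is the same, with the even frequencies.

Kronecker's theorem is obtained in `dense_zmultiples_of_mFourier_ne_one` by comparing Haar measures.
-/

/-- Orthogonality: a function multiplicative under translation by `a`, with `χ a ≠ 1`, has
zero integral against every translation-invariant measure. -/
theorem integral_eq_zero_of_char {G : Type*} [AddCommGroup G] [MeasurableSpace G]
    [MeasurableAdd G] (m : MeasureTheory.Measure G) [m.IsAddLeftInvariant] (χ : G → ℂ) (a : G)
    (hadd : ∀ x, χ (a + x) = χ a * χ x) (ha : χ a ≠ 1) : ∫ x, χ x ∂m = 0 := by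
  have h := MeasureTheory.integral_add_left_eq_self (μ := m) χ a
  simp_rw [hadd, MeasureTheory.integral_const_mul] at h
  have : (χ a - 1) * ∫ x, χ x ∂m = 0 := by rw [sub_mul, h]; ring
  exact (mul_eq_zero.1 this).resolve_left (sub_ne_zero.2 ha)

theorem mFourier_apply_add {d : Type*} [Fintype d] (n : d → ℤ) (x y : UnitAddTorus d) :
    UnitAddTorus.mFourier n (x + y) = UnitAddTorus.mFourier n x * UnitAddTorus.mFourier n y := by
  simp [UnitAddTorus.mFourier, Finset.prod_mul_distrib, smul_add, AddCircle.toCircle_add]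

open MeasureTheory BoundedContinuousFunction in
/-- Kronecker's theorem in dual form: if no nontrivial character of the torus is trivial on `a`,
then `a` generates a dense subgroup. The Haar probability measures of the torus and of the closed
subgroup generated by `a` have the same Fourier coefficients, hence coincide, so the open
complement of the subgroup is null and therefore empty. -/
theorem dense_zmultiples_of_mFourier_ne_one {d : Type*} [Fintype d] (a : UnitAddTorus d)
    (ha : ∀ n : d → ℤ, n ≠ 0 → UnitAddTorus.mFourier n a ≠ 1) :
    Dense (AddSubgroup.zmultiples a : Set (UnitAddTorus d)) := by
  -- Haar measure of the whole torus is compared with Haar measure of the closed subgroup `H`.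
  set H := (AddSubgroup.zmultiples a).topologicalClosure with hH
  have hHc : IsClosed (H : Set (UnitAddTorus d)) := AddSubgroup.isClosed_topologicalClosure _
  have : CompactSpace H := isCompact_iff_compactSpace.1 hHc.isCompact
  have haH : a ∈ H := AddSubgroup.le_topologicalClosure _ (AddSubgroup.mem_zmultiples a)
  let m : Measure (UnitAddTorus d) := Measure.addHaarMeasure ⊤
  let m' : Measure H := Measure.addHaarMeasure ⊤
  have hm : m Set.univ = 1 := by
    simpa using Measure.addHaarMeasure_self (K₀ := (⊤ : TopologicalSpace.PositiveCompacts (UnitAddTorus d)))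
  have hm' : m' Set.univ = 1 := by
    simpa using Measure.addHaarMeasure_self (K₀ := (⊤ : TopologicalSpace.PositiveCompacts H))
  have : IsProbabilityMeasure m := ⟨hm⟩
  have : IsProbabilityMeasure m' := ⟨hm'⟩
  have hemb : MeasurableEmbedding ((↑) : H → UnitAddTorus d) :=
    MeasurableEmbedding.subtype_coe hHc.measurableSet
  let q : Measure (UnitAddTorus d) := m'.map (↑)
  have : IsProbabilityMeasure q :=
    Measure.isProbabilityMeasure_map hemb.measurable.aemeasurable
  have hcont : ∀ (r : Measure (UnitAddTorus d)) [IsFiniteMeasure r] (f : C(UnitAddTorus d, ℂ)),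
      Integrable f r := fun r _ f =>
    f.continuous.integrable_of_hasCompactSupport (HasCompactSupport.of_compactSpace _)
  have key : ∀ f ∈ UnitAddTorus.mFourierSubalgebra d, ∫ x, f x ∂m = ∫ x, f x ∂q := by
    intro f hf
    replace hf : f ∈ Submodule.span ℂ (Set.range UnitAddTorus.mFourier) := by
      rw [← UnitAddTorus.mFourierSubalgebra_coe]; exact hf
    induction hf using Submodule.span_induction with
    | mem f hf =>
      obtain ⟨n, rfl⟩ := hf
      -- For `n ≠ 0` both integrals vanish, since `a` lies in both groups.
      by_cases hn : n = 0
      · simp [hn, UnitAddTorus.mFourier_zero]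
      · rw [integral_eq_zero_of_char m _ a (fun x => mFourier_apply_add n a x) (ha n hn),
          hemb.integral_map,
          integral_eq_zero_of_char m' (fun x : H => UnitAddTorus.mFourier n x) ⟨a, haH⟩
            (fun x => mFourier_apply_add n a x) (ha n hn)]
    | zero => simp
    | add f g _ _ hf hg =>
      simp only [ContinuousMap.add_apply]
      rw [integral_add (hcont m f) (hcont m g), integral_add (hcont q f) (hcont q g), hf, hg]
    | smul c f _ hf =>
      simp only [ContinuousMap.smul_apply, integral_smul, hf]
  have hmq : m = q := by
    refine ext_of_forall_mem_subalgebra_integral_eq_of_polish (𝕜 := ℂ)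
      (A := (UnitAddTorus.mFourierSubalgebra d).comap (toContinuousMapStarₐ ℂ)) ?_
      fun g hg => key _ hg
    intro x y hxy
    obtain ⟨_, ⟨f, hf, rfl⟩, hfxy⟩ := UnitAddTorus.mFourierSubalgebra_separatesPoints hxy
    exact ⟨f, ⟨f, ⟨BoundedContinuousFunction.mkOfCompact f, hf, rfl⟩, rfl⟩, hfxy⟩
  have h0 : m (H : Set (UnitAddTorus d))ᶜ = 0 := by
    rw [hmq, hemb.map_apply]
    convert measure_empty (μ := m')
    ext x; simp
  have h1 : (H : Set (UnitAddTorus d))ᶜ = ∅ := hHc.isOpen_compl.measure_eq_zero_iff m |>.1 h0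
  rw [dense_iff_closure_eq, ← AddSubgroup.topologicalClosure_coe, ← hH]
  simpa using h1

/-- Every point of the closed unit disc is the midpoint of a chord of the unit circle: with
`w = cos ψ * exp (i * φ)`, take the endpoints at angles `φ ± ψ`. -/
theorem exists_mid (w : ℂ) (hw : ‖w‖ ≤ 1) : ∃ s t : ℝ,
    (1 / 2 : ℂ) * (exp (s * I) + exp (t * I)) = w := by
  refine ⟨arg w + Real.arccos ‖w‖, arg w - Real.arccos ‖w‖, ?_⟩
  have h : Complex.cos (Real.arccos ‖w‖) = ‖w‖ := by
    rw [← ofReal_cos, Real.cos_arccos (by linarith [norm_nonneg w]) hw]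
  conv_rhs => rw [← norm_mul_exp_arg_mul_I w, ← h, Complex.cos]
  push_cast
  rw [add_mul, sub_mul, Complex.exp_add, sub_eq_add_neg, Complex.exp_add, neg_mul]
  ring

/-- The Fourier–Stieltjes coefficients of `(δ_α + δ_β) / 2` at frequencies congruent to `j`
modulo `2` are dense in the closed unit disc. They are the values of a continuous function on the
two-dimensional torus along the orbit `b + k • a` with `a = (α / π, β / π)`, and that orbit is dense
by independence of `α, β, π`. -/
theorem dense_orbit (α β : ℝ) (hind : LinearIndependent ℚ ![α, β, π]) (j : ℤ) :
    Metric.closedBall (0 : ℂ) 1 ⊆ closure (Set.range fun k : ℤ => (1 / 2 : ℂ) *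
      (exp (-(((2 * k + j : ℤ) : ℂ) * α) * I) + exp (-(((2 * k + j : ℤ) : ℂ) * β) * I))) := by
  let a : UnitAddTorus (Fin 2) := ![((α / π : ℝ) : UnitAddCircle), ((β / π : ℝ) : UnitAddCircle)]
  let b : UnitAddTorus (Fin 2) :=
    ![((j * α / (2 * π) : ℝ) : UnitAddCircle), ((j * β / (2 * π) : ℝ) : UnitAddCircle)]
  let Φ : UnitAddTorus (Fin 2) → ℂ := fun x =>
    (1 / 2 : ℂ) * (fourier (-1) (x 0) + fourier (-1) (x 1))
  have hΦ : Continuous Φ := by fun_prop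
  have hπ : (π : ℂ) ≠ 0 := ofReal_ne_zero.2 pi_ne_zero
  have hdense : DenseRange fun k : ℤ => b + k • a := by
    have h1 := dense_zmultiples_of_mFourier_ne_one a (by
      intro n hn h
      apply hn
      have h2 : exp ((n 0 * (α / π) + n 1 * (β / π)) * (2 * π * I)) = 1 := by
        rw [← h, UnitAddTorus.mFourier, ContinuousMap.coe_mk, Fin.prod_univ_two]
        simp only [a, Matrix.cons_val_zero, Matrix.cons_val_one, fourier_coe_apply,
          ← Complex.exp_add]
        congr 1
        push_cast
        ring
      obtain ⟨m, hm⟩ := exp_eq_one_iff.1 h2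
      have hm := mul_right_cancel₀ two_pi_I_ne_zero hm
      have h3 : n 0 * α + n 1 * β - m * π = 0 := by
        have : (n 0 * α + n 1 * β - m * π : ℂ) = 0 := by
          rw [← hm]; field_simp; ring
        exact_mod_cast this
      have h4 := Fintype.linearIndependent_iff.1 hind ![(n 0 : ℚ), (n 1 : ℚ), -(m : ℚ)] (by
        simp [Fin.sum_univ_three, Rat.smul_def]
        linarith)
      ext i
      fin_cases i
      · simpa using h4 0
      · simpa using h4 1)
    have h2 : DenseRange fun k : ℤ => k • a := by
      rwa [DenseRange, ← AddSubgroup.coe_zmultiples]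
    exact (Homeomorph.addLeft b).surjective.denseRange.comp h2 (Homeomorph.addLeft b).continuous
  intro w hw
  obtain ⟨s, t, rfl⟩ := exists_mid w (by simpa using hw)
  let p : UnitAddTorus (Fin 2) :=
    ![((-s / (2 * π) : ℝ) : UnitAddCircle), ((-t / (2 * π) : ℝ) : UnitAddCircle)]
  have hp : Φ p = (1 / 2 : ℂ) * (exp (s * I) + exp (t * I)) := by
    simp only [Φ, p, Matrix.cons_val_zero, Matrix.cons_val_one, fourier_coe_apply]
    congr 3
    all_goals push_cast; field_simp
  rw [← hp]
  have := hΦ.range_subset_closure_image_dense hdense (Set.mem_range_self p)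
  rw [← Set.range_comp] at this
  convert this using 3
  ext k
  have e : ∀ x : ℝ, ((j * x / (2 * π) : ℝ) : UnitAddCircle) + k • ((x / π : ℝ) : UnitAddCircle)
      = ((j * x / (2 * π) + k * (x / π) : ℝ) : UnitAddCircle) := by
    intro x; simp
  simp only [Function.comp, Φ, a, b, Pi.add_apply, Pi.smul_apply, Matrix.cons_val_zero,
    Matrix.cons_val_one, e, fourier_coe_apply]
  congr 3
  all_goals push_cast; field_simp; ring

/-- For complementary idempotents `θ, θ'`, the spectrum of `μ * θ + r • (ρ * θ')` lies in the disc
of radius `r`, because a character kills either `θ` or `θ'`. The frequencies `e k` at which `θ'` is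
evaluated to `1` already fill this disc densely. -/
theorem natural_spectrum_aux {M : Type*} [NormedCommRing M] [NormedAlgebra ℂ M]
    [CompleteSpace M] (h1 : ‖(1 : M)‖ = 1) (F : ℤ → (M →ₐ[ℂ] ℂ)) (θ θ' μ ρ : M) (r : ℝ)
    (hr : r = (spectralRadius ℂ (μ * θ)).toReal)
    (hsum : θ + θ' = 1) (hmul : θ * θ' = 0)
    (hρ : ∀ φ : M →ₐ[ℂ] ℂ, ‖φ ρ‖ ≤ 1) (e : ℤ → ℤ) (he : ∀ k, F (e k) θ' = 1)
    (hd : Metric.closedBall (0 : ℂ) 1 ⊆ closure (Set.range fun k => F (e k) ρ)) :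
    spectrum ℂ (μ * θ + (r : ℂ) • (ρ * θ')) =
      closure {w : ℂ | ∃ n : ℤ, w = F n (μ * θ + (r : ℂ) • (ρ * θ'))} := by
  have : NormOneClass M := ⟨h1⟩
  have hr0 : 0 ≤ r := hr ▸ ENNReal.toReal_nonneg
  apply subset_antisymm
  · have hsub : spectrum ℂ (μ * θ + (r : ℂ) • (ρ * θ')) ⊆ Metric.closedBall 0 r := by
      intro z hz
      obtain ⟨f, rfl⟩ := WeakDual.CharacterSpace.mem_spectrum_iff_exists.1 hz
      let φ : M →ₐ[ℂ] ℂ := WeakDual.CharacterSpace.equivAlgHom f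
      change φ _ ∈ _
      have hs : φ θ + φ θ' = 1 := by rw [← map_add, hsum, map_one]
      have hm : φ θ * φ θ' = 0 := by rw [← map_mul, hmul, map_zero]
      rw [mem_closedBall_zero_iff, map_add, map_smul, map_mul φ ρ]
      rcases mul_eq_zero.1 hm with h | h
      · have h' : φ θ' = 1 := by simpa [h] using hs
        simp only [map_mul, h, h', mul_zero, zero_add, mul_one, smul_eq_mul, norm_mul, norm_real,
          Real.norm_of_nonneg hr0]
        exact mul_le_of_le_one_right hr0 (hρ φ)
      · simp only [h, mul_zero, smul_zero, add_zero]
        have hle : (‖φ (μ * θ)‖₊ : ENNReal) ≤ spectralRadius ℂ (μ * θ) :=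
          le_iSup₂ (f := fun (k : ℂ) (_ : k ∈ spectrum ℂ (μ * θ)) => (‖k‖₊ : ENNReal)) _
            (AlgHom.apply_mem_spectrum φ _)
        have hfin : spectralRadius ℂ (μ * θ) ≠ ⊤ :=
          ne_top_of_le_ne_top ENNReal.coe_ne_top (spectrum.spectralRadius_le_nnnorm _)
        rw [hr]
        simpa using ENNReal.toReal_mono hfin hle
    have hF : ∀ k, F (e k) (μ * θ + (r : ℂ) • (ρ * θ')) = r * F (e k) ρ := by
      intro k
      have hm : F (e k) θ * F (e k) θ' = 0 := by rw [← map_mul, hmul, map_zero]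
      rw [he, mul_one] at hm
      rw [map_add, map_mul, hm, map_smul, map_mul, he, mul_zero, zero_add, mul_one, smul_eq_mul]
    intro z hz
    have hz := hsub hz
    have hz' : z ∈ (fun w : ℂ => (r : ℂ) * w) '' Metric.closedBall 0 1 := by
      rcases hr0.eq_or_lt with h | h
      · refine ⟨0, by simp, ?_⟩
        simpa [← h, eq_comm] using hz
      · refine ⟨z / r, ?_, mul_div_cancel₀ _ (ofReal_ne_zero.2 h.ne')⟩
        simpa [abs_of_pos h, div_le_one h] using hz
    refine closure_mono ?_ (image_closure_subset_closure_image
      (continuous_const.mul continuous_id) (Set.image_mono hd hz'))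
    rintro _ ⟨_, ⟨k, rfl⟩, rfl⟩
    exact ⟨e k, (hF k).symm⟩
  · refine closure_minimal ?_ (spectrum.isClosed _)
    rintro _ ⟨n, rfl⟩
    exact AlgHom.apply_mem_spectrum _ _

/-- Hatori–Sato decomposition for the circle: every μ ∈ M(𝕋) is a sum
μ = ν₀ + ν₁ + ν₂ where ν₀, ν₁ have natural spectrum and ν₂ is discrete
(a linear combination of Dirac measures). -/
theorem hatori_sato_decomposition (M : Type*) [NormedCommRing M] [NormedAlgebra ℂ M]
    [CompleteSpace M]
    (δ : ℝ → M) (hδ : ∀ x y : ℝ, δ x * δ y = δ (x + y))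
    (hone : δ 0 = 1) (hper : ∀ x : ℝ, δ (x + 2 * π) = δ x)
    (hnorm : ∀ x : ℝ, ‖δ x‖ = 1)
    (F : ℤ → (M →ₐ[ℂ] ℂ))
    (hF : ∀ (n : ℤ) (x : ℝ), F n (δ x) = Complex.exp (-((n : ℂ) * (x : ℂ)) * Complex.I))
    (α β : ℝ)
    (hα : α ∈ Set.Ioo (0 : ℝ) (2 * π)) (hβ : β ∈ Set.Ioo (0 : ℝ) (2 * π))
    (hind : LinearIndependent ℚ ![α, β, π])
    (θ₀ θ₁ ρ : M)
    (hθ₀ : θ₀ = (1 / 2 : ℂ) • (δ 0 + δ π))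
    (hθ₁ : θ₁ = (1 / 2 : ℂ) • (δ 0 - δ π))
    (hρ : ρ = (1 / 2 : ℂ) • (δ α + δ β))
    (μ : M)
    (r₀ r₁ : ℝ)
    (hr₀ : r₀ = (spectralRadius ℂ (μ * θ₀)).toReal)
    (hr₁ : r₁ = (spectralRadius ℂ (μ * θ₁)).toReal)
    (ν₀ ν₁ ν₂ : M)
    (hν₀ : ν₀ = μ * θ₀ + (r₀ : ℂ) • (ρ * θ₁))
    (hν₁ : ν₁ = μ * θ₁ + (r₁ : ℂ) • (ρ * θ₀))
    (hν₂ : ν₂ = -((r₀ : ℂ) • (ρ * θ₁)) - (r₁ : ℂ) • (ρ * θ₀)) :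
    μ = ν₀ + ν₁ + ν₂ ∧
    spectrum ℂ ν₀ = closure {w : ℂ | ∃ n : ℤ, w = F n ν₀} ∧
    spectrum ℂ ν₁ = closure {w : ℂ | ∃ n : ℤ, w = F n ν₁} ∧
    ν₂ ∈ Submodule.span ℂ (Set.range δ) := by
  have hsq : δ π * δ π = 1 := by
    rw [hδ, ← hone, ← hper 0]; ring_nf
  have hsum : θ₀ + θ₁ = 1 := by
    rw [hθ₀, hθ₁, hone]; module
  have hmul : θ₀ * θ₁ = 0 := by
    rw [hθ₀, hθ₁, hone, smul_mul_smul_comm]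
    have : (1 + δ π) * (1 - δ π) = 0 := by linear_combination -hsq
    rw [this, smul_zero]
  have h1 : ‖(1 : M)‖ = 1 := hone ▸ hnorm 0
  have hρ1 : ∀ φ : M →ₐ[ℂ] ℂ, ‖φ ρ‖ ≤ 1 := by
    intro φ
    have : NormOneClass M := ⟨h1⟩
    have hle : ‖ρ‖ ≤ 1 := by
      rw [hρ, norm_smul]
      have := norm_add_le (δ α) (δ β)
      rw [hnorm, hnorm] at this
      norm_num
      linarith
    exact (AlgHom.norm_apply_le_self φ ρ).trans hle
  have hFπ : ∀ k j : ℤ, F (2 * k + j) (δ π) = exp (-(j * π) * I) := by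
    intro k j
    rw [hF, exp_eq_exp_iff_exists_int]
    exact ⟨-k, by push_cast; ring⟩
  have hFρ : ∀ n : ℤ, F n ρ = (1 / 2 : ℂ) * (exp (-((n : ℂ) * α) * I) + exp (-((n : ℂ) * β) * I)) := by
    intro n
    rw [hρ, map_smul, map_add, hF, hF, smul_eq_mul]
  refine ⟨?_, ?_, ?_, ?_⟩
  · rw [hν₀, hν₁, hν₂]
    linear_combination (-μ) * hsum
  · rw [hν₀]
    refine natural_spectrum_aux h1 F θ₀ θ₁ μ ρ r₀ hr₀ hsum hmul hρ1 (fun k => 2 * k + 1) ?_ ?_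
    · intro k
      have : exp (-((1 : ℤ) * π) * I) = -1 := by
        rw [Int.cast_one, one_mul, neg_mul, Complex.exp_neg, exp_pi_mul_I]; norm_num
      rw [hθ₁, map_smul, map_sub, hFπ, this, hone, map_one, smul_eq_mul]
      norm_num
    · simp_rw [hFρ]
      exact dense_orbit α β hind 1
  · rw [hν₁]
    refine natural_spectrum_aux h1 F θ₁ θ₀ μ ρ r₁ hr₁ (by rw [add_comm, hsum])
      (by rw [mul_comm, hmul]) hρ1 (fun k => 2 * k + 0) ?_ ?_
    · intro k
      rw [hθ₀, map_smul, map_add, hFπ, hone, map_one, smul_eq_mul]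
      norm_num
    · simp_rw [hFρ]
      exact dense_orbit α β hind 0
  · have hmem : ∀ x, δ x ∈ Submodule.span ℂ (Set.range δ) := fun x =>
      Submodule.subset_span ⟨x, rfl⟩
    have e0 : ρ * θ₀ = (1 / 4 : ℂ) • (δ α + δ β + δ (α + π) + δ (β + π)) := by
      rw [hρ, hθ₀, smul_mul_smul_comm, add_mul, mul_add, mul_add, hδ, hδ, hδ, hδ, add_zero,
        add_zero]
      module
    have e1 : ρ * θ₁ = (1 / 4 : ℂ) • (δ α + δ β - δ (α + π) - δ (β + π)) := by
      rw [hρ, hθ₁, smul_mul_smul_comm, add_mul, mul_sub, mul_sub, hδ, hδ, hδ, hδ, add_zero,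
        add_zero]
      module
    have m0 : ρ * θ₀ ∈ Submodule.span ℂ (Set.range δ) := by
      rw [e0]
      exact Submodule.smul_mem _ _ (add_mem (add_mem (add_mem (hmem _) (hmem _)) (hmem _)) (hmem _))
    have m1 : ρ * θ₁ ∈ Submodule.span ℂ (Set.range δ) := by
      rw [e1]
      exact Submodule.smul_mem _ _ (sub_mem (sub_mem (add_mem (hmem _) (hmem _)) (hmem _)) (hmem _))
    rw [hν₂]
    exact sub_mem (neg_mem (Submodule.smul_mem _ _ m1)) (Submodule.smul_mem _ _ m0)
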